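/- arXiv:2511.21217 — 2 statements merged into one kernel-verified Lean document; each statement's English description precedes it below -/
import Mathlib

section
/- Let S be a finite set with n ≥ 1 elements and let F be a nonempty family of subsets of S. Call a weight function w : S → {1, 2, …, 2n} isolating if there is a unique set A ∈ F minimizing the weight w(A) = Σ_{x∈A} w(x) over all members of F. Then at least half of all (2n)^n weight functions w : S → {1, …, 2n} are isolating; equivalently, if the weights w(x) are chosen uniformly and independently from {1, …, 2n}, then with probability at least 1/2 there is a unique minimum-weight set in F. -/
open scoped Classical

/-!
If the minimum-weight set is not unique, some element `x` lies in one minimum-weight set and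
outside another. The weight of such an `x` is then the least weight of a member avoiding `x` minus
the least weight, not counting `x`, of a member containing `x`, so it is determined by the weights
of the other elements. Hence at most `N ^ (n - 1)` of the `N ^ n` weight functions fail at a given
`x`, and at most `n * N ^ (n - 1)` of them fail at all.
-/

/-- `A` is a minimum-weight set of the family `F` for the weight function `w`. Weights may be taken
in any ordered additive monoid. -/
def IsMinWeight {α M : Type*} [AddCommMonoid M] [LE M] (F : Finset (Finset α)) (w : α → M)
    (A : Finset α) : Prop :=
  A ∈ F ∧ ∀ B ∈ F, ∑ x ∈ A, w x ≤ ∑ x ∈ B, w x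

/-- The weight function `w` is isolating for the family `F`: exactly one member of `F` has minimum
weight. -/
def IsIsolating {α M : Type*} [AddCommMonoid M] [LE M] (F : Finset (Finset α)) (w : α → M) : Prop :=
  ∃! A, IsMinWeight F w A

/-- The element `x` is ambiguous for `w`: some minimum-weight set of `F` contains `x` and some other
one does not. Ambiguous elements witness that `w` is not isolating. -/
def IsAmbiguousAt {α M : Type*} [AddCommMonoid M] [LE M] (F : Finset (Finset α)) (w : α → M)
    (x : α) : Prop :=
  ∃ A B, IsMinWeight F w A ∧ IsMinWeight F w B ∧ x ∈ A ∧ x ∉ B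

section Ambiguous

variable {α M : Type*} [AddCommMonoid M] {F : Finset (Finset α)} {w v : α → M} {x : α}

theorem exists_isMinWeight [LinearOrder M] (hF : F.Nonempty) (w : α → M) :
    ∃ A, IsMinWeight F w A :=
  F.exists_min_image (fun A => ∑ x ∈ A, w x) hF

theorem exists_isAmbiguousAt_of_not_isIsolating [LinearOrder M] (hF : F.Nonempty)
    (hw : ¬ IsIsolating F w) : ∃ x, IsAmbiguousAt F w x := by
  by_contra! hamb
  have subset_of_isMin {A B : Finset α} (hA : IsMinWeight F w A) (hB : IsMinWeight F w B) : A ⊆ B :=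
    fun x hxA => by_contra fun hxB => hamb x ⟨A, B, hA, hB, hxA, hxB⟩
  obtain ⟨A, hA⟩ := exists_isMinWeight hF w
  exact hw ⟨A, hA, fun B hB => (subset_of_isMin hB hA).antisymm (subset_of_isMin hA hB)⟩

variable [PartialOrder M] [IsOrderedCancelAddMonoid M]

theorem IsAmbiguousAt.apply_le_of_eqOn_compl (hw : IsAmbiguousAt F w x)
    (hv : IsAmbiguousAt F v x) (h : Set.EqOn w v {x}ᶜ) : w x ≤ v x := by
  obtain ⟨A, -, hA, -, hxA, -⟩ := hw
  obtain ⟨-, B, -, hB, -, hxB⟩ := hv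
  have hsumA : ∑ y ∈ A.erase x, w y = ∑ y ∈ A.erase x, v y :=
    Finset.sum_congr rfl fun y hy => h (Finset.ne_of_mem_erase hy)
  have hsumB : ∑ y ∈ B, w y = ∑ y ∈ B, v y :=
    Finset.sum_congr rfl fun y hy => h (ne_of_mem_of_not_mem hy hxB)
  refine le_of_add_le_add_right (a := ∑ y ∈ A.erase x, v y) ?_
  calc w x + ∑ y ∈ A.erase x, v y = ∑ y ∈ A, w y := by
        rw [← hsumA, Finset.add_sum_erase A w hxA]
    _ ≤ ∑ y ∈ B, w y := hA.2 B hB.1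
    _ = ∑ y ∈ B, v y := hsumB
    _ ≤ ∑ y ∈ A, v y := hB.2 A hA.1
    _ = v x + ∑ y ∈ A.erase x, v y := (Finset.add_sum_erase A v hxA).symm

theorem IsAmbiguousAt.eq_of_eqOn_compl (hw : IsAmbiguousAt F w x) (hv : IsAmbiguousAt F v x)
    (h : Set.EqOn w v {x}ᶜ) : w = v := by
  have hx : w x = v x :=
    (hw.apply_le_of_eqOn_compl hv h).antisymm (hv.apply_le_of_eqOn_compl hw h.symm)
  funext y
  by_cases hy : y = x
  · rw [hy, hx]
  · exact h hy

end Ambiguous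

section Counting

open Finset

variable {α ι M : Type*} [Fintype α] [Fintype ι] [AddCommMonoid M] {F : Finset (Finset α)}
  {f : ι → M}

theorem card_isAmbiguousAt_le [PartialOrder M] [IsOrderedCancelAddMonoid M] (hf : f.Injective)
    (x : α) : #{w : α → ι | IsAmbiguousAt F (f ∘ w) x} ≤
      Fintype.card ι ^ (Fintype.card α - 1) := by
  have hinj : Set.InjOn (({x}ᶜ : Set α).domRestrict (π := fun _ => ι))
      {w : α → ι | IsAmbiguousAt F (f ∘ w) x} := fun w hw v hv hwv =>
    have heqOn : Set.EqOn w v {x}ᶜ := Set.domRestrict_eq_domRestrict_iff.mp hwv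
    hf.comp_left (hw.eq_of_eqOn_compl hv heqOn.comp_left)
  calc _ ≤ Fintype.card (↥({x}ᶜ : Set α) → ι) :=
        card_le_card_of_injOn _ (fun _ _ => mem_univ _) (by rwa [coe_filter_univ])
    _ = Fintype.card ι ^ (Fintype.card α - 1) := by
        rw [Fintype.card_fun, Fintype.card_compl_set, Set.card_singleton]

variable [LinearOrder M] [IsOrderedCancelAddMonoid M]

theorem card_not_isIsolating_le (hF : F.Nonempty) (hf : f.Injective) :
    #{w : α → ι | ¬ IsIsolating F (f ∘ w)} ≤
      Fintype.card α * Fintype.card ι ^ (Fintype.card α - 1) := by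
  have hcover : ({w : α → ι | ¬ IsIsolating F (f ∘ w)} : Finset (α → ι)) ⊆
      univ.biUnion fun x => {w : α → ι | IsAmbiguousAt F (f ∘ w) x} := fun w hw => by
    simpa using exists_isAmbiguousAt_of_not_isIsolating hF (mem_filter.mp hw).2
  exact (card_le_card hcover).trans
    (card_biUnion_le_card_mul _ _ _ fun x _ => card_isAmbiguousAt_le hf x)

theorem stmt0_general (hF : F.Nonempty) (hf : f.Injective) :
    Fintype.card ι ^ Fintype.card α ≤
      #{w : α → ι | IsIsolating F (f ∘ w)} +
        Fintype.card α * Fintype.card ι ^ (Fintype.card α - 1) := by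
  rw [← Fintype.card_fun, ← card_univ,
    ← card_filter_add_card_filter_not fun w : α → ι => IsIsolating F (f ∘ w)]
  exact Nat.add_le_add_left (card_not_isIsolating_le hF hf) _

end Counting

/-- The Isolating Lemma of Mulmuley, Vazirani and Vazirani.
`S` is modeled as a fintype `α` with `n` elements; a weight function with values in
`{1, …, 2n}` is modeled as `w : α → Fin (2 * n)`, the value of `w` at `x` being
`(w x : ℕ) + 1`.  A weight function is isolating if there is a unique member of the
family `F` of minimum weight.  At least half of all `(2*n)^n` weight functions are
isolating. -/
theorem stmt0 {α : Type*} [Fintype α] (n : ℕ) (hn : 1 ≤ n)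
    (hcard : Fintype.card α = n) (F : Finset (Finset α)) (hF : F.Nonempty) :
    (2 * n) ^ n ≤
      2 * (Finset.univ.filter (fun w : α → Fin (2 * n) =>
        ∃! A, A ∈ F ∧ ∀ B ∈ F, (∑ x ∈ A, ((w x : ℕ) + 1)) ≤ ∑ x ∈ B, ((w x : ℕ) + 1))).card := by
  have hgeneral := stmt0_general (f := fun i : Fin (2 * n) => (i : ℕ) + 1) hF
    ((add_left_injective 1).comp Fin.val_injective)
  have hhalf : 2 * (n * (2 * n) ^ (n - 1)) = (2 * n) ^ n := by
    rw [← mul_assoc, mul_pow_sub_one (by omega)]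
  rw [hcard, Fintype.card_fin] at hgeneral
  change _ ≤ 2 * (Finset.univ.filter fun w : α → Fin (2 * n) =>
    IsIsolating F ((fun i : Fin (2 * n) => (i : ℕ) + 1) ∘ w)).card
  omega
end

section
/- Let S ⊆ ℕ be a finite set of k natural numbers, each less than 2^n with n ≥ 1, and let N be a natural number such that the number of primes less than or equal to N is strictly greater than n·k·(k−1)/2. Then there exists a prime p ≤ N such that the map x ↦ x mod p is injective on S, i.e., for all x ≠ y in S, x mod p ≠ y mod p. -/
/-!
Two integers collide modulo `p` exactly when `p` divides their difference. Pairwise coprime moduli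
`p ≥ b` that all divide a nonzero `d` have a product dividing `d`, so if `|d| < b ^ (n + 1)` there
are at most `n` of them. Hence each of the `k.choose 2` pairs of keys spoils at most `n` moduli, and
a modulus from a family of more than `n * k.choose 2` survives all pairs.
-/

open Finset

theorem pow_card_le_of_pairwise_coprime_of_dvd {P : Finset ℕ} {b d : ℕ} (hd : d ≠ 0)
    (hb : ∀ p ∈ P, b ≤ p) (hP : (P : Set ℕ).Pairwise Nat.Coprime) (hdvd : ∀ p ∈ P, p ∣ d) :
    b ^ #P ≤ d :=
  calc b ^ #P ≤ ∏ p ∈ P, p := pow_card_le_prod _ _ _ hb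
    _ ≤ d := Nat.le_of_dvd (Nat.pos_of_ne_zero hd) <|
      prod_dvd_of_isRelPrime
        (fun _ hp _ hq hpq => Nat.coprime_iff_isRelPrime.1 (hP hp hq hpq)) hdvd

theorem card_filter_emod_eq_le {P : Finset ℕ} {b n : ℕ} {x y : ℤ}
    (hb : ∀ p ∈ P, b ≤ p) (hP : (P : Set ℕ).Pairwise Nat.Coprime) (hxy : x ≠ y)
    (hlt : |x - y| < (b : ℤ) ^ (n + 1)) : #(P.filter fun p : ℕ => x % p = y % p) ≤ n := by
  have hd : (x - y).natAbs ≠ 0 := Int.natAbs_ne_zero.2 (sub_ne_zero.2 hxy)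
  have hd_lt : (x - y).natAbs < b ^ (n + 1) := by
    rw [Int.abs_eq_natAbs] at hlt
    exact_mod_cast hlt
  have hb_pos : 0 < b := Nat.pos_of_ne_zero (by rintro rfl; simp at hd_lt)
  have hpow : b ^ #(P.filter fun p : ℕ => x % p = y % p) ≤ (x - y).natAbs := by
    refine pow_card_le_of_pairwise_coprime_of_dvd hd (fun p hp => hb p (mem_filter.1 hp).1)
      (hP.mono (coe_subset.2 (filter_subset _ _))) fun p hp => ?_
    exact Int.natCast_dvd.1 (Int.ModEq.symm (mem_filter.1 hp).2).dvd
  exact Nat.le_of_lt_succ ((pow_right_mono₀ hb_pos).reflect_lt (hpow.trans_lt hd_lt))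

theorem exists_injOn_of_card_collisions_le {ι α β : Type*} [DecidableEq β] {I : Finset ι}
    {S : Finset α} {f : ι → α → β} {m : ℕ}
    (hcoll : ∀ x ∈ S, ∀ y ∈ S, x ≠ y → #{i ∈ I | f i x = f i y} ≤ m)
    (hcard : m * (#S).choose 2 < #I) : ∃ i ∈ I, Set.InjOn (f i) S := by
  classical
  by_contra! hnot
  let bad (t : Finset α) : Finset ι := {i ∈ I | ¬ Set.InjOn (f i) t}
  have hcover : I ⊆ (S.powersetCard 2).biUnion bad := by
    intro i hi
    obtain ⟨x, hx, y, hy, hfxy, hxy⟩ : ∃ x ∈ S, ∃ y ∈ S, f i x = f i y ∧ x ≠ y := by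
      simpa [Set.InjOn] using hnot i hi
    have hpair : {x, y} ∈ S.powersetCard 2 :=
      mem_powersetCard.2 ⟨insert_subset hx (singleton_subset_iff.2 hy), card_pair hxy⟩
    exact mem_biUnion.2 ⟨{x, y}, hpair, mem_filter.2 ⟨hi, fun hinj =>
      hxy (hinj (by simp) (by simp) hfxy)⟩⟩
  have hbad : ∀ t ∈ S.powersetCard 2, #(bad t) ≤ m := by
    intro t ht
    obtain ⟨htS, htcard⟩ := mem_powersetCard.1 ht
    obtain ⟨x, y, hxy, rfl⟩ := card_eq_two.1 htcard
    have hbad_eq : bad {x, y} = {i ∈ I | f i x = f i y} := by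
      simp [bad, Set.injOn_pair, hxy]
    rw [hbad_eq]
    exact hcoll x (htS (by simp)) y (htS (by simp)) hxy
  refine hcard.not_ge ?_
  calc #I ≤ #((S.powersetCard 2).biUnion bad) := card_le_card hcover
    _ ≤ #(S.powersetCard 2) * m := card_biUnion_le_card_mul _ _ m hbad
    _ = m * (#S).choose 2 := by rw [card_powersetCard, mul_comm]

theorem stmt2_general {S : Finset ℤ} {P : Finset ℕ} {b n : ℕ}
    (hb : ∀ p ∈ P, b ≤ p) (hP : (P : Set ℕ).Pairwise Nat.Coprime)
    (hS : ∀ x ∈ S, ∀ y ∈ S, |x - y| < (b : ℤ) ^ (n + 1)) (hcard : n * (#S).choose 2 < #P) :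
    ∃ p ∈ P, Set.InjOn (fun x : ℤ => x % p) S :=
  exists_injOn_of_card_collisions_le
    (fun x hx y hy hxy => card_filter_emod_eq_le hb hP hxy (hS x hx y hy)) hcard

theorem exists_injOn_mod_of_forall_lt_pow {S P : Finset ℕ} {b n : ℕ}
    (hb : ∀ p ∈ P, b ≤ p) (hP : (P : Set ℕ).Pairwise Nat.Coprime)
    (hS : ∀ x ∈ S, x < b ^ (n + 1)) (hcard : n * (#S).choose 2 < #P) :
    ∃ p ∈ P, Set.InjOn (fun x => x % p) S := by
  have hdiff : ∀ x ∈ S.map Nat.castEmbedding, ∀ y ∈ S.map Nat.castEmbedding,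
      |x - y| < (b : ℤ) ^ (n + 1) := by
    simp only [forall_mem_map, Nat.castEmbedding_apply]
    exact fun x hx y hy => abs_sub_lt_of_nonneg_of_lt (Int.natCast_nonneg x)
      (mod_cast hS x hx) (Int.natCast_nonneg y) (mod_cast hS y hy)
  obtain ⟨p, hp, hinj⟩ := stmt2_general hb hP hdiff (by rwa [card_map])
  exact ⟨p, hp, fun x hx y hy hxy => Nat.castEmbedding.injective <|
    hinj (mem_map_of_mem _ hx) (mem_map_of_mem _ hy) (congrArg Nat.cast hxy)⟩

/-- Quantitative Fredman–Komlós–Szemerédi hashing: if `S` is a set of `k` natural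
numbers, each less than `2^n` (`n ≥ 1`), and the number of primes `≤ N` exceeds
`n·k·(k−1)/2`, then some prime `p ≤ N` separates all elements of `S` modulo `p`. -/
theorem stmt2 (S : Finset ℕ) (n k : ℕ) (hn : 1 ≤ n) (hk : S.card = k)
    (hS : ∀ x ∈ S, x < 2 ^ n) (N : ℕ)
    (hN : n * (k * (k - 1)) / 2 < ((Finset.range (N + 1)).filter Nat.Prime).card) :
    ∃ p, Nat.Prime p ∧ p ≤ N ∧ ∀ x ∈ S, ∀ y ∈ S, x ≠ y → x % p ≠ y % p := by
  obtain ⟨m, rfl⟩ := Nat.exists_eq_add_of_le' hn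
  have hcard : m * (#S).choose 2 < #N.primesLE := by
    refine lt_of_le_of_lt ?_ hN
    rw [hk, Nat.choose_two_right, Nat.mul_div_assoc _ (Nat.even_mul_pred_self k).two_dvd]
    exact Nat.mul_le_mul_right _ m.le_succ
  obtain ⟨p, hp, hinj⟩ := exists_injOn_mod_of_forall_lt_pow
    (fun p hp => (Nat.prime_of_mem_primesLE hp).two_le)
    (fun p hp q hq => (Nat.coprime_primes (Nat.prime_of_mem_primesLE hp)
      (Nat.prime_of_mem_primesLE hq)).2) hS hcard
  exact ⟨p, Nat.prime_of_mem_primesLE hp, Nat.le_of_mem_primesLE hp,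
    fun x hx y hy hxy hmod => hxy (hinj hx hy hmod)⟩
end
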